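/- Let Φ be a finite, reduced, irreducible, crystallographic root system with base Δ, positive roots Φ⁺, and highest root θ = Σ_{β∈Δ} m_β·β. Define the dual Coxeter number h^∨ := 1 + Σ_{β∈Δ} m_β·(β,β)/(θ,θ). Then for every long simple root α ∈ Δ, the cardinality of the set {γ ∈ Φ⁺ : ⟨γ,α^∨⟩ = −1} equals h^∨ − 2. -/

import Mathlib

open scoped RealInnerProductSpace
open scoped Classical

noncomputable section

variable {V : Type*} [NormedAddCommGroup V] [InnerProductSpace ℝ V]

/-- The coroot pairing `⟨x, γ^∨⟩ = 2(x,γ)/(γ,γ)`. -/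
def corootPairing (x γ : V) : ℝ := 2 * ⟪x, γ⟫ / ⟪γ, γ⟫

/-- The reflection `s_γ(x) = x - ⟨x,γ^∨⟩γ` associated to a root `γ`. -/
def rootReflection (γ x : V) : V := x - corootPairing x γ • γ

/-- A finite, reduced, crystallographic root system `Φ` in a real inner product
space `V`, together with a base (set of simple roots) `Δ` and the integral
coefficients `coeff γ β` of each root `γ` on each simple root `β`. -/
structure RootSystemWithBase (V : Type*) [NormedAddCommGroup V]
    [InnerProductSpace ℝ V] : Type _ where
  /-- the set of roots -/
  Φ : Finset V
  /-- the base (set of simple roots) -/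
  Δ : Finset V
  /-- the coefficient of the root `γ` on the simple root `β` -/
  coeff : V → V → ℤ
  zero_not_mem : (0 : V) ∉ Φ
  spans : Submodule.span ℝ (Φ : Set V) = ⊤
  crystallographic : ∀ γ ∈ Φ, ∀ δ ∈ Φ, ∃ n : ℤ, corootPairing γ δ = n
  reflection_mem : ∀ γ ∈ Φ, ∀ δ ∈ Φ, rootReflection γ δ ∈ Φ
  reduced : ∀ γ ∈ Φ, ∀ c : ℝ, c • γ ∈ Φ → c = 1 ∨ c = -1
  base_subset : Δ ⊆ Φ
  base_indep : LinearIndependent ℝ (fun β : (Δ : Set V) => (β : V))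
  root_eq_sum : ∀ γ ∈ Φ, γ = ∑ β ∈ Δ, (coeff γ β : ℝ) • β
  root_sign : ∀ γ ∈ Φ, (∀ β ∈ Δ, 0 ≤ coeff γ β) ∨ (∀ β ∈ Δ, coeff γ β ≤ 0)

namespace RootSystemWithBase

variable (R : RootSystemWithBase V)

/-- The positive roots `Φ⁺` with respect to the base `Δ`. -/
def Pos : Finset V := R.Φ.filter fun γ => ∀ β ∈ R.Δ, 0 ≤ R.coeff γ β

/-- The negative roots `Φ⁻ = -Φ⁺`. -/
def Neg : Finset V := R.Pos.image fun γ => -γ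

/-- Irreducibility: `Φ` admits no decomposition into two nonempty mutually
orthogonal subsets. -/
def Irreducible : Prop :=
  ∀ S ⊆ R.Φ, (∀ γ ∈ S, ∀ δ ∈ R.Φ, δ ∉ S → ⟪γ, δ⟫ = 0) → S = ∅ ∨ S = R.Φ

/-- `θ` is the highest root: it is a root whose coefficients on the base
dominate those of every root. -/
def IsHighestRoot (θ : V) : Prop :=
  θ ∈ R.Φ ∧ ∀ γ ∈ R.Φ, ∀ β ∈ R.Δ, R.coeff γ β ≤ R.coeff θ β

end RootSystemWithBase

namespace RootSystemWithBase

theorem aux_coeff (R : RootSystemWithBase V) {γ : V} (hγ : γ ∈ R.Φ) (c : V → ℝ)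
    (h : γ = ∑ β ∈ R.Δ, c β • β) : ∀ β ∈ R.Δ, (R.coeff γ β : ℝ) = c β := by
  have hli := R.base_indep
  have h0 : ∑ β ∈ R.Δ, ((R.coeff γ β : ℝ) - c β) • β = 0 := by
    simp only [sub_smul, Finset.sum_sub_distrib]
    rw [← h, ← R.root_eq_sum γ hγ, sub_self]
  have h1 : LinearIndepOn ℝ id (R.Δ : Set V) := hli
  rw [linearIndepOn_finset_iff] at h1
  intro β hβ
  have := h1 (fun β => (R.coeff γ β : ℝ) - c β) h0 β hβ
  linarith

theorem aux_pos (R : RootSystemWithBase V) {γ : V} (hγ : γ ∈ R.Φ) : 0 < ⟪γ, γ⟫ := by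
  have : γ ≠ 0 := fun h => R.zero_not_mem (h ▸ hγ)
  exact real_inner_self_pos.mpr this

theorem aux_pair_self {γ : V} (h : 0 < ⟪γ, γ⟫) : corootPairing γ γ = 2 := by
  unfold corootPairing
  field_simp

theorem aux_refl_inner (γ x y : V) :
    ⟪rootReflection γ x, rootReflection γ y⟫ = ⟪x, y⟫ := by
  unfold rootReflection corootPairing
  by_cases h : γ = 0
  · simp [h]
  have h : 0 < ⟪γ, γ⟫ := real_inner_self_pos.mpr h
  simp only [inner_sub_left, inner_sub_right, real_inner_smul_left, real_inner_smul_right]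
  rw [real_inner_comm γ x, real_inner_comm y γ, real_inner_comm γ y]
  field_simp
  ring

theorem aux_refl_refl (γ x : V) : rootReflection γ (rootReflection γ x) = x := by
  unfold rootReflection corootPairing
  by_cases h : γ = 0
  · simp [h]
  have h : 0 < ⟪γ, γ⟫ := real_inner_self_pos.mpr h
  simp only [inner_sub_left, real_inner_smul_left]
  have : 2 * (⟪x, γ⟫ - 2 * ⟪x, γ⟫ / ⟪γ, γ⟫ * ⟪γ, γ⟫) / ⟪γ, γ⟫ = - (2 * ⟪x, γ⟫ / ⟪γ, γ⟫) := by
    field_simp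
    ring
  rw [this]
  simp

theorem aux_refl_self {γ : V} (h : 0 < ⟪γ, γ⟫) : rootReflection γ γ = -γ := by
  unfold rootReflection
  rw [aux_pair_self h, two_smul]
  abel

theorem aux_neg (R : RootSystemWithBase V) {γ : V} (hγ : γ ∈ R.Φ) : -γ ∈ R.Φ := by
  rw [← aux_refl_self (R.aux_pos hγ)]
  exact R.reflection_mem γ hγ γ hγ

theorem aux_coeff_neg (R : RootSystemWithBase V) {γ : V} (hγ : γ ∈ R.Φ) :
    ∀ β ∈ R.Δ, R.coeff (-γ) β = - R.coeff γ β := by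
  intro β hβ
  have := R.aux_coeff (R.aux_neg hγ) (fun β => -(R.coeff γ β : ℝ)) (by
    simp only [neg_smul, Finset.sum_neg_distrib]
    rw [← R.root_eq_sum γ hγ]) β hβ
  exact_mod_cast this

theorem aux_coeff_base (R : RootSystemWithBase V) {γ : V} (hγ : γ ∈ R.Δ) :
    ∀ β ∈ R.Δ, R.coeff γ β = if β = γ then 1 else 0 := by
  intro β hβ
  have := R.aux_coeff (R.base_subset hγ) (fun β => if β = γ then 1 else 0) (by
    simp [ite_smul, hγ]) β hβ
  exact_mod_cast this

theorem aux_coeff_refl (R : RootSystemWithBase V) {γ δ : V} (hγ : γ ∈ R.Φ) (hδ : δ ∈ R.Δ) :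
    ∀ β ∈ R.Δ, (R.coeff (rootReflection δ γ) β : ℝ)
      = R.coeff γ β - if β = δ then corootPairing γ δ else 0 := by
  intro β hβ
  refine R.aux_coeff (R.reflection_mem δ (R.base_subset hδ) γ hγ)
    (fun β => (R.coeff γ β : ℝ) - if β = δ then corootPairing γ δ else 0) ?_ β hβ
  simp only [sub_smul, Finset.sum_sub_distrib, ite_smul, zero_smul]
  rw [← R.root_eq_sum γ hγ]
  simp [hδ, rootReflection]

theorem aux_mem_pos (R : RootSystemWithBase V) {γ : V} :
    γ ∈ R.Pos ↔ γ ∈ R.Φ ∧ ∀ β ∈ R.Δ, 0 ≤ R.coeff γ β := by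
  simp [Pos]

theorem aux_base_pos (R : RootSystemWithBase V) {β : V} (hβ : β ∈ R.Δ) : β ∈ R.Pos := by
  rw [aux_mem_pos]
  refine ⟨R.base_subset hβ, fun δ hδ => ?_⟩
  rw [R.aux_coeff_base hβ δ hδ]
  split_ifs <;> simp

theorem aux_neg_not_pos (R : RootSystemWithBase V) {γ : V} (hγ : γ ∈ R.Pos) : -γ ∉ R.Pos := by
  intro h
  rw [aux_mem_pos] at h hγ
  have h0 : ∀ β ∈ R.Δ, R.coeff γ β = 0 := by
    intro β hβ
    have h1 := hγ.2 β hβ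
    have h2 := h.2 β hβ
    rw [R.aux_coeff_neg hγ.1 β hβ] at h2
    omega
  have := R.root_eq_sum γ hγ.1
  rw [Finset.sum_eq_zero (fun β hβ => by rw [h0 β hβ]; simp)] at this
  exact R.zero_not_mem (this ▸ hγ.1)

theorem aux_refl_pos (R : RootSystemWithBase V) {β γ : V} (hβ : β ∈ R.Δ)
    (hγ : γ ∈ R.Pos.erase β) : rootReflection β γ ∈ R.Pos.erase β := by
  rw [Finset.mem_erase, aux_mem_pos] at hγ
  obtain ⟨hne, hΦ, hp⟩ := hγ
  have hr := R.reflection_mem β (R.base_subset hβ) γ hΦ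
  have hex : ∃ δ ∈ R.Δ, δ ≠ β ∧ 0 < R.coeff γ δ := by
    by_contra hcon
    push Not at hcon
    have h1 := R.root_eq_sum γ hΦ
    rw [Finset.sum_eq_single_of_mem β hβ (fun δ hδ hd => by
      have : R.coeff γ δ = 0 := le_antisymm (hcon δ hδ hd) (hp δ hδ)
      rw [this]; simp)] at h1
    have h2 : (R.coeff γ β : ℝ) • β ∈ R.Φ := h1 ▸ hΦ
    have h3 : (0:ℝ) ≤ R.coeff γ β := by exact_mod_cast hp β hβ
    rcases R.reduced β (R.base_subset hβ) _ h2 with h | h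
    · rw [h, one_smul] at h1
      exact hne h1
    · linarith
  obtain ⟨δ, hδ, hd, hpos⟩ := hex
  have hc := R.aux_coeff_refl hΦ hβ δ hδ
  rw [if_neg hd, sub_zero] at hc
  have hc : R.coeff (rootReflection β γ) δ = R.coeff γ δ := by exact_mod_cast hc
  rw [Finset.mem_erase, aux_mem_pos]
  refine ⟨fun h => ?_, hr, ?_⟩
  · rw [h, R.aux_coeff_base hβ δ hδ, if_neg hd] at hc
    omega
  · rcases R.root_sign _ hr with h | h
    · exact h
    · have := h δ hδ
      omega

/-- `(2ρ, β) = (β, β)`. -/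
theorem aux_two_rho (R : RootSystemWithBase V) {β : V} (hβ : β ∈ R.Δ) :
    ∑ γ ∈ R.Pos, ⟪γ, β⟫ = ⟪β, β⟫ := by
  have hb := R.aux_pos (R.base_subset hβ)
  rw [← Finset.add_sum_erase _ _ (R.aux_base_pos hβ)]
  have h : ∑ γ ∈ R.Pos.erase β, ⟪γ, β⟫ = ∑ γ ∈ R.Pos.erase β, -⟪γ, β⟫ := by
    refine Finset.sum_bij' (fun γ _ => rootReflection β γ) (fun γ _ => rootReflection β γ)
      (fun γ hγ => R.aux_refl_pos hβ hγ) (fun γ hγ => R.aux_refl_pos hβ hγ)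
      (fun γ _ => aux_refl_refl β γ) (fun γ _ => aux_refl_refl β γ) ?_
    intro γ _
    have := aux_refl_inner β γ β
    rw [aux_refl_self hb, inner_neg_right] at this
    linarith
  rw [Finset.sum_neg_distrib] at h
  linarith

theorem aux_sum_even (R : RootSystemWithBase V) (f : V → ℝ) (hf : ∀ x, f (-x) = f x) :
    ∑ γ ∈ R.Φ, f γ = 2 * ∑ γ ∈ R.Pos, f γ := by
  rw [← Finset.sum_filter_add_sum_filter_not R.Φ (fun γ => ∀ β ∈ R.Δ, 0 ≤ R.coeff γ β), two_mul]
  congr 1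
  refine Finset.sum_bij' (fun γ _ => -γ) (fun γ _ => -γ) ?_ ?_ (by simp) (by simp) (by simp [hf])
  · intro γ hγ
    rw [Finset.mem_filter] at hγ
    rw [aux_mem_pos]
    refine ⟨R.aux_neg hγ.1, fun β hβ => ?_⟩
    rw [R.aux_coeff_neg hγ.1 β hβ]
    rcases R.root_sign γ hγ.1 with h | h
    · exact absurd h hγ.2
    · have := h β hβ
      omega
  · intro γ hγ
    rw [Finset.mem_filter]
    have h := R.aux_neg_not_pos hγ
    rw [aux_mem_pos] at hγ h
    exact ⟨R.aux_neg hγ.1, fun h' => h ⟨R.aux_neg hγ.1, h'⟩⟩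

/-- the symmetric form `B(x,y) = Σ (γ,x)(γ,y)`. -/
def auxB (R : RootSystemWithBase V) (x y : V) : ℝ := ∑ γ ∈ R.Φ, ⟪γ, x⟫ * ⟪γ, y⟫

theorem auxB_comm (R : RootSystemWithBase V) (x y : V) : R.auxB x y = R.auxB y x := by
  unfold auxB
  exact Finset.sum_congr rfl fun _ _ => mul_comm _ _

theorem auxB_refl (R : RootSystemWithBase V) {δ : V} (hδ : δ ∈ R.Φ) (x y : V) :
    R.auxB (rootReflection δ x) (rootReflection δ y) = R.auxB x y := by
  unfold auxB
  refine Finset.sum_bij' (fun γ _ => rootReflection δ γ) (fun γ _ => rootReflection δ γ)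
      (fun γ hγ => R.reflection_mem δ hδ γ hγ) (fun γ hγ => R.reflection_mem δ hδ γ hγ)
      (fun γ _ => aux_refl_refl δ γ) (fun γ _ => aux_refl_refl δ γ) ?_
  intro γ _
  rw [← aux_refl_inner δ γ (rootReflection δ x), ← aux_refl_inner δ γ (rootReflection δ y),
    aux_refl_refl, aux_refl_refl]

theorem auxB_root (R : RootSystemWithBase V) {δ : V} (hδ : δ ∈ R.Φ) (y : V) :
    R.auxB δ y = R.auxB δ δ / ⟪δ, δ⟫ * ⟪δ, y⟫ := by
  have hd := R.aux_pos hδ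
  have h := R.auxB_refl hδ δ y
  rw [aux_refl_self hd] at h
  have h2 : R.auxB (-δ) (rootReflection δ y)
      = - R.auxB δ y + corootPairing y δ * R.auxB δ δ := by
    unfold auxB rootReflection
    rw [Finset.mul_sum, ← Finset.sum_neg_distrib, ← Finset.sum_add_distrib]
    refine Finset.sum_congr rfl fun γ _ => ?_
    rw [inner_neg_right, inner_sub_right, real_inner_smul_right]
    ring
  rw [h2] at h
  unfold corootPairing at h
  rw [real_inner_comm] at h
  field_simp at h ⊢
  linarith

theorem auxB_irr (R : RootSystemWithBase V) (hirr : R.Irreducible) {δ ε : V}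
    (hδ : δ ∈ R.Φ) (hε : ε ∈ R.Φ) : R.auxB δ δ / ⟪δ, δ⟫ = R.auxB ε ε / ⟪ε, ε⟫ := by
  have key : ∀ γ ∈ R.Φ.filter (fun γ => R.auxB γ γ / ⟪γ, γ⟫ = R.auxB ε ε / ⟪ε, ε⟫),
      ∀ κ ∈ R.Φ, κ ∉ R.Φ.filter (fun γ => R.auxB γ γ / ⟪γ, γ⟫ = R.auxB ε ε / ⟪ε, ε⟫) →
      ⟪γ, κ⟫ = 0 := by
    intro γ hγ κ hκ hn
    rw [Finset.mem_filter] at hγ hn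
    by_contra hne
    apply hn
    refine ⟨hκ, ?_⟩
    rw [← hγ.2]
    have h1 := R.auxB_root hγ.1 κ
    have h2 := R.auxB_root hκ γ
    rw [R.auxB_comm, h1, real_inner_comm κ γ] at h2
    rw [real_inner_comm κ γ] at hne
    exact (mul_right_cancel₀ hne h2).symm
  rcases hirr _ (Finset.filter_subset _ _) key with h | h
  · have h0 : ε ∈ (∅ : Finset V) := by
      rw [← h]
      exact Finset.mem_filter.mpr ⟨hε, rfl⟩
    simp at h0
  · rw [← h] at hδ
    exact (Finset.mem_filter.mp hδ).2

theorem aux_dom (R : RootSystemWithBase V) {γ : V}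
    (h : ∀ β ∈ R.Δ, 0 ≤ ⟪γ, β⟫) (c : V → ℤ) (hc : ∀ β ∈ R.Δ, 0 ≤ c β) :
    0 ≤ ⟪γ, ∑ β ∈ R.Δ, (c β : ℝ) • β⟫ := by
  rw [inner_sum]
  refine Finset.sum_nonneg fun β hβ => ?_
  rw [real_inner_smul_right]
  exact mul_nonneg (by exact_mod_cast hc β hβ) (h β hβ)

theorem aux_dom_of (R : RootSystemWithBase V) {γ : V} (hγ : γ ∈ R.Φ)
    (h : ∀ β ∈ R.Δ, ∑ δ ∈ R.Δ, R.coeff (rootReflection β γ) δ ≤ ∑ δ ∈ R.Δ, R.coeff γ δ) :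
    ∀ β ∈ R.Δ, 0 ≤ ⟪γ, β⟫ := by
  intro β hβ
  have hb := R.aux_pos (R.base_subset hβ)
  have h1 : (∑ δ ∈ R.Δ, (R.coeff (rootReflection β γ) δ : ℝ)) ≤ ∑ δ ∈ R.Δ, (R.coeff γ δ : ℝ) := by
    exact_mod_cast h β hβ
  rw [Finset.sum_congr rfl (R.aux_coeff_refl hγ hβ), Finset.sum_sub_distrib] at h1
  simp only [Finset.sum_ite_eq', hβ, if_true] at h1
  have h2 : 0 ≤ corootPairing γ β := by linarith
  unfold corootPairing at h2
  by_contra hc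
  push Not at hc
  have := div_neg_of_neg_of_pos (by linarith : 2 * ⟪γ, β⟫ < 0) hb
  linarith

theorem aux_theta_dom (R : RootSystemWithBase V) {θ : V} (hθ : R.IsHighestRoot θ) :
    ∀ β ∈ R.Δ, 0 ≤ ⟪θ, β⟫ :=
  R.aux_dom_of hθ.1 fun β hβ => Finset.sum_le_sum fun δ hδ =>
    hθ.2 _ (R.reflection_mem β (R.base_subset hβ) θ hθ.1) δ hδ

theorem aux_theta_long (R : RootSystemWithBase V) {θ : V} (hθ : R.IsHighestRoot θ)
    {γ : V} (hγ : γ ∈ R.Φ) : ⟪γ, γ⟫ ≤ ⟪θ, θ⟫ := by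
  obtain ⟨μ, hμ, hmax⟩ := Finset.exists_max_image (R.Φ.filter fun κ => ⟪κ, κ⟫ = ⟪γ, γ⟫)
    (fun κ => ∑ δ ∈ R.Δ, R.coeff κ δ) ⟨γ, by simp [hγ]⟩
  rw [Finset.mem_filter] at hμ
  have hd := R.aux_dom_of hμ.1 (fun β hβ => hmax _ (by
    rw [Finset.mem_filter]
    exact ⟨R.reflection_mem β (R.base_subset hβ) μ hμ.1, by rw [aux_refl_inner]; exact hμ.2⟩))
  have hdiff : θ - μ = ∑ β ∈ R.Δ, ((R.coeff θ β - R.coeff μ β : ℤ) : ℝ) • β := by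
    push_cast
    simp only [sub_smul, Finset.sum_sub_distrib]
    rw [← R.root_eq_sum θ hθ.1, ← R.root_eq_sum μ hμ.1]
  have hnn : ∀ β ∈ R.Δ, 0 ≤ R.coeff θ β - R.coeff μ β := fun β hβ => by
    have := hθ.2 μ hμ.1 β hβ
    omega
  have h1 := R.aux_dom hd _ hnn
  have h2 := R.aux_dom (R.aux_theta_dom hθ) _ hnn
  rw [← hdiff, inner_sub_right] at h1 h2
  rw [real_inner_comm] at h1
  rw [← hμ.2]
  linarith

theorem aux_le_two (R : RootSystemWithBase V) {γ ε : V} (hε : ε ∈ R.Φ)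
    (h : ⟪γ, γ⟫ ≤ ⟪ε, ε⟫) (hne : γ ≠ ε) : corootPairing γ ε < 2 := by
  have he := R.aux_pos hε
  have : 0 < ⟪γ - ε, γ - ε⟫ := real_inner_self_pos.mpr (sub_ne_zero.mpr hne)
  rw [real_inner_sub_sub_self] at this
  unfold corootPairing
  rw [div_lt_iff₀ he]
  linarith

theorem aux_cases (R : RootSystemWithBase V) {γ ε : V} (hγ : γ ∈ R.Pos) (hε : ε ∈ R.Pos)
    (h : ⟪γ, γ⟫ ≤ ⟪ε, ε⟫) (hne : γ ≠ ε) :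
    corootPairing γ ε = -1 ∨ corootPairing γ ε = 0 ∨ corootPairing γ ε = 1 := by
  have hγ' := (R.aux_mem_pos.mp hγ).1
  have hε' := (R.aux_mem_pos.mp hε).1
  have h1 := R.aux_le_two hε' h hne
  have hne2 : -γ ≠ ε := fun h => R.aux_neg_not_pos hγ (h ▸ hε)
  have h2 := R.aux_le_two hε' (by rwa [inner_neg_neg]) hne2
  have h3 : corootPairing (-γ) ε = - corootPairing γ ε := by
    unfold corootPairing
    rw [inner_neg_left]
    ring
  obtain ⟨n, hn⟩ := R.crystallographic γ hγ' ε hε'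
  rw [h3] at h2
  rw [hn] at h1 h2 ⊢
  have h1 : n < 2 := by exact_mod_cast h1
  have h2 : -n < 2 := by exact_mod_cast h2
  have : n = -1 ∨ n = 0 ∨ n = 1 := by omega
  rcases this with h | h | h <;> simp [h]

theorem aux_sumsq (R : RootSystemWithBase V) {ε : V} (hε : ε ∈ R.Φ) :
    ∑ γ ∈ R.Pos, corootPairing γ ε ^ 2 = 2 * (R.auxB ε ε / ⟪ε, ε⟫) / ⟪ε, ε⟫ := by
  have he := R.aux_pos hε
  have h := R.aux_sum_even (fun γ => ⟪γ, ε⟫ * ⟪γ, ε⟫) (by simp)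
  unfold auxB
  rw [h]
  unfold corootPairing
  simp only [div_pow]
  rw [← Finset.sum_div]
  have : ∑ γ ∈ R.Pos, (2 * ⟪γ, ε⟫) ^ 2 = 4 * ∑ γ ∈ R.Pos, ⟪γ, ε⟫ * ⟪γ, ε⟫ := by
    rw [Finset.mul_sum]
    exact Finset.sum_congr rfl fun _ _ => by ring
  rw [this]
  field_simp
  ring

end RootSystemWithBase

/-- For a finite, reduced, irreducible, crystallographic root
system `Φ` with base `Δ`, positive roots `Φ⁺` and highest root
`θ = Σ_{β∈Δ} m_β·β`, define the dual Coxeter number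
`h^∨ = 1 + Σ_{β∈Δ} m_β·(β,β)/(θ,θ)`. Then for every long simple root `α ∈ Δ`,
the cardinality of `{γ ∈ Φ⁺ : ⟨γ,α^∨⟩ = −1}` equals `h^∨ − 2`. -/
theorem card_roots_pairing_neg_one_eq_dual_coxeter_sub_two
    (R : RootSystemWithBase V) (hirr : R.Irreducible)
    (θ : V) (hθ : R.IsHighestRoot θ)
    (α : V) (hα : α ∈ R.Δ) (hlong : ⟪α, α⟫ = ⟪θ, θ⟫) :
    ((R.Pos.filter fun γ => corootPairing γ α = -1).card : ℝ)
      = (1 + ∑ β ∈ R.Δ, (R.coeff θ β : ℝ) * (⟪β, β⟫ / ⟪θ, θ⟫)) - 2 := by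
  have hαΦ := R.base_subset hα
  have hαP := R.aux_base_pos hα
  have hθP : θ ∈ R.Pos := by
    rw [R.aux_mem_pos]
    refine ⟨hθ.1, fun β hβ => ?_⟩
    have h := hθ.2 β (R.base_subset hβ) β hβ
    rw [R.aux_coeff_base hβ β hβ, if_pos rfl] at h
    omega
  have hα0 := R.aux_pos hαΦ
  have hθ0 := R.aux_pos hθ.1
  have hlen : ∀ γ ∈ R.Pos, ⟪γ, γ⟫ ≤ ⟪θ, θ⟫ := fun γ hγ =>
    R.aux_theta_long hθ (R.aux_mem_pos.mp hγ).1
  have hsq : ∑ γ ∈ R.Pos, corootPairing γ α ^ 2 = ∑ γ ∈ R.Pos, corootPairing γ θ ^ 2 := by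
    rw [R.aux_sumsq hαΦ, R.aux_sumsq hθ.1, R.auxB_irr hirr hαΦ hθ.1, hlong]
  -- α side
  have h1 : ∑ γ ∈ R.Pos, corootPairing γ α = 2 := by
    unfold corootPairing
    rw [← Finset.sum_div, ← Finset.mul_sum, R.aux_two_rho hα]
    field_simp
  have h2 : ∑ γ ∈ R.Pos, (corootPairing γ α ^ 2 - corootPairing γ α)
      = 2 + 2 * ((R.Pos.filter fun γ => corootPairing γ α = -1).card : ℝ) := by
    have : ∀ γ ∈ R.Pos, corootPairing γ α ^ 2 - corootPairing γ α
        = (if γ = α then 2 else 0) + 2 * (if corootPairing γ α = -1 then 1 else 0) := by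
      intro γ hγ
      by_cases hne : γ = α
      · subst hne
        rw [RootSystemWithBase.aux_pair_self hα0]
        norm_num
      · rcases R.aux_cases hγ hαP (by rw [hlong]; exact hlen γ hγ) hne with h | h | h <;>
          rw [h, if_neg hne] <;> norm_num
    rw [Finset.sum_congr rfl this, Finset.sum_add_distrib, ← Finset.mul_sum, Finset.sum_boole]
    simp [hαP]
  -- θ side
  have h3 : ∑ γ ∈ R.Pos, corootPairing γ θ
      = 2 * ∑ β ∈ R.Δ, (R.coeff θ β : ℝ) * (⟪β, β⟫ / ⟪θ, θ⟫) := by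
    unfold corootPairing
    rw [← Finset.sum_div, ← Finset.mul_sum]
    have : ∑ γ ∈ R.Pos, ⟪γ, θ⟫ = ∑ β ∈ R.Δ, (R.coeff θ β : ℝ) * ⟪β, β⟫ := by
      conv_lhs => rw [R.root_eq_sum θ hθ.1]
      simp only [inner_sum, real_inner_smul_right]
      rw [Finset.sum_comm]
      refine Finset.sum_congr rfl fun β hβ => ?_
      rw [← Finset.mul_sum, R.aux_two_rho hβ]
    rw [this, mul_div_assoc, Finset.sum_div]
    simp only [mul_div_assoc]
  have h4 : ∑ γ ∈ R.Pos, (corootPairing γ θ ^ 2 - corootPairing γ θ) = 2 := by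
    have : ∀ γ ∈ R.Pos, corootPairing γ θ ^ 2 - corootPairing γ θ
        = (if γ = θ then 2 else 0) := by
      intro γ hγ
      by_cases hne : γ = θ
      · subst hne
        rw [RootSystemWithBase.aux_pair_self hθ0]
        norm_num
      · have hγ' := R.aux_mem_pos.mp hγ
        have hnn : 0 ≤ ⟪γ, θ⟫ := by
          rw [real_inner_comm, R.root_eq_sum γ hγ'.1]
          exact R.aux_dom (R.aux_theta_dom hθ) _ hγ'.2
        have hp : 0 ≤ corootPairing γ θ := by
          unfold corootPairing
          positivity
        rcases R.aux_cases hγ hθP (hlen γ hγ) hne with h | h | h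
        · rw [h] at hp
          norm_num at hp
        · rw [h, if_neg hne]; norm_num
        · rw [h, if_neg hne]; norm_num
    rw [Finset.sum_congr rfl this]
    simp [hθP]
  rw [Finset.sum_sub_distrib] at h2 h4
  linarith


end
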